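/- Let r_k > 0 (k ≥ 2) be step ratios, and let the BDF2 kernels be d^{(2,n)}_0 = d₀(r_n,0), d^{(2,n)}_1 = d₁(r_n,0), and d^{(2,n)}_j = 0 for j ≥ 2 (n ≥ 2). Then the DOC kernels ϑ^{(2,n)}_{n−j}, defined by ϑ^{(2,n)}_0 = 1/d^{(2,n)}_0 and ϑ^{(2,n)}_{n−j} = −(1/d^{(2,j)}_0)·Σ_{i=j+1}^{n} ϑ^{(2,n)}_{n−i} d^{(2,i)}_{i−j} for 2 ≤ j ≤ n−1, admit the explicit formula ϑ^{(2,n)}_{n−j} = (1/d^{(2,j)}_0)·∏_{i=j+1}^{n} r_i/(1+2r_i) > 0 for all 2 ≤ j ≤ n. -/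

import Mathlib

/-- BDF coefficient function `d₀(x,y)`; note `d₀(r,0) = (1+2r)/(1+r)`. -/
noncomputable def d0 (x y : ℝ) : ℝ := (1 + 2*x)/(1 + x) + x*y/(1 + y + x*y)

/-- BDF coefficient function `d₁(x,y)`; note `d₁(r,0) = -r/(1+r)`. -/
noncomputable def d1 (x y : ℝ) : ℝ :=
  -(x/(1 + x)) - x*y/(1 + y + x*y) - (x*y^2/(1 + y + x*y)) * ((1 + x)/(1 + y))

/-- The BDF2 kernels `d^{(2,n)}_j`: `d^{(2,n)}_0 = d₀(r_n,0)`, `d^{(2,n)}_1 = d₁(r_n,0)`,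
and `d^{(2,n)}_j = 0` for `j ≥ 2`. -/
noncomputable def dk2 (r : ℕ → ℝ) (n j : ℕ) : ℝ :=
  if j = 0 then d0 (r n) 0 else if j = 1 then d1 (r n) 0 else 0

/-!
The BDF2 kernels form a lower bidiagonal matrix, so each sum in the recursion defining the DOC
kernels collapses to its first term. Every step down in `j` therefore multiplies by a single ratio
of kernels, `-d^{(2,i)}_1 / d^{(2,i)}_0 = r_i / (1 + 2 r_i)`.
-/

/-- `ϑ` is a family of discrete orthogonal convolution (DOC) kernels for the convolution kernels
`d`, with indices starting at `m`. Here `d i k` stands for `d^{(i)}_k`, whereas `ϑ n j` stands for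
`ϑ^{(n)}_{n-j}`: its second index is the time level and not the lag. -/
structure IsDOCKernel {K : Type*} [Field K] (m : ℕ) (d ϑ : ℕ → ℕ → K) : Prop where
  apply_self : ∀ n, m ≤ n → ϑ n n = 1 / d n 0
  apply_of_lt : ∀ n j, m ≤ j → j < n →
    ϑ n j = -(1 / d j 0) * ∑ i ∈ Finset.Icc (j + 1) n, ϑ n i * d i (i - j)

namespace IsDOCKernel

variable {K : Type*} [Field K] {m n j : ℕ} {d ϑ : ℕ → ℕ → K}

theorem apply_eq_mul_apply_succ (hϑ : IsDOCKernel m d ϑ) (hd : ∀ i k, 2 ≤ k → d i k = 0)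
    (hmj : m ≤ j) (hjn : j < n) :
    ϑ n j = -(1 / d j 0) * (ϑ n (j + 1) * d (j + 1) 1) := by
  have hsum : ∑ i ∈ Finset.Icc (j + 1) n, ϑ n i * d i (i - j) = ϑ n (j + 1) * d (j + 1) 1 := by
    rw [Finset.sum_eq_single_of_mem (j + 1) (Finset.left_mem_Icc.2 hjn), Nat.add_sub_cancel_left]
    intro i hi hne
    have hlag : 2 ≤ i - j := by
      have := (Finset.mem_Icc.1 hi).1
      omega
    rw [hd i _ hlag, mul_zero]
  rw [hϑ.apply_of_lt n j hmj hjn, hsum]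

theorem apply_eq_one_div_mul_prod (hϑ : IsDOCKernel m d ϑ) (hd : ∀ i k, 2 ≤ k → d i k = 0)
    (hmj : m ≤ j) (hjn : j ≤ n) :
    ϑ n j = 1 / d j 0 * ∏ i ∈ Finset.Icc (j + 1) n, -d i 1 / d i 0 := by
  induction hjn using Nat.decreasingInduction with
  | self => simp [hϑ.apply_self n hmj]
  | of_succ j hjn ih =>
    rw [hϑ.apply_eq_mul_apply_succ hd hmj hjn, ih (by omega),
      ← Finset.insert_Icc_add_one_left_eq_Icc (Nat.succ_le_of_lt hjn),
      Finset.prod_insert (by simp)]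
    ring

end IsDOCKernel

section BDF2Kernels

variable {r : ℕ → ℝ} {n : ℕ}

theorem dk2_zero (r : ℕ → ℝ) (n : ℕ) : dk2 r n 0 = (1 + 2 * r n) / (1 + r n) := by
  simp [dk2, d0]

theorem dk2_one (r : ℕ → ℝ) (n : ℕ) : dk2 r n 1 = -(r n / (1 + r n)) := by
  simp [dk2, d1]

theorem dk2_of_two_le (r : ℕ → ℝ) (n : ℕ) {k : ℕ} (hk : 2 ≤ k) : dk2 r n k = 0 := by
  rw [dk2, if_neg (by omega), if_neg (by omega)]

theorem dk2_zero_pos (hr : 0 ≤ r n) : 0 < dk2 r n 0 := by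
  rw [dk2_zero]
  positivity

theorem neg_dk2_one_div_dk2_zero (hr : 1 + r n ≠ 0) :
    -dk2 r n 1 / dk2 r n 0 = r n / (1 + 2 * r n) := by
  rw [dk2_one, dk2_zero, neg_neg, div_div_div_cancel_right₀ hr]

end BDF2Kernels

/-- Explicit formula and positivity for the BDF2 DOC kernels (Lemma 2.1):
writing `ϑ n j` for `ϑ^{(2,n)}_{n-j}`, defined by `ϑ^{(2,n)}_0 = 1/d^{(2,n)}_0` and the
recursion `ϑ^{(2,n)}_{n-j} = -(1/d^{(2,j)}_0) Σ_{i=j+1}^n ϑ^{(2,n)}_{n-i} d^{(2,i)}_{i-j}`,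
one has `ϑ^{(2,n)}_{n-j} = (1/d^{(2,j)}_0) ∏_{i=j+1}^n r_i/(1+2r_i) > 0` for `2 ≤ j ≤ n`. -/
theorem bdf2_doc_formula
    (r : ℕ → ℝ) (hr : ∀ k, 2 ≤ k → 0 < r k)
    (ϑ : ℕ → ℕ → ℝ)
    (hϑdiag : ∀ n, 2 ≤ n → ϑ n n = 1 / dk2 r n 0)
    (hϑrec : ∀ n j, 2 ≤ j → j < n →
      ϑ n j = -(1 / dk2 r j 0) * ∑ i ∈ Finset.Icc (j+1) n, ϑ n i * dk2 r i (i - j)) :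
    ∀ n j, 2 ≤ j → j ≤ n →
      ϑ n j = (1 / dk2 r j 0) * ∏ i ∈ Finset.Icc (j+1) n, r i / (1 + 2 * r i)
        ∧ 0 < ϑ n j := by
  intro n j hj hjn
  have hr_Icc : ∀ i ∈ Finset.Icc (j + 1) n, 0 < r i := fun i hi =>
    hr i (by have := (Finset.mem_Icc.1 hi).1; omega)
  have hϑ : IsDOCKernel 2 (dk2 r) ϑ := ⟨hϑdiag, hϑrec⟩
  have hformula : ϑ n j = (1 / dk2 r j 0) * ∏ i ∈ Finset.Icc (j + 1) n, r i / (1 + 2 * r i) := by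
    rw [hϑ.apply_eq_one_div_mul_prod (fun i _ => dk2_of_two_le r i) hj hjn]
    congr 1
    refine Finset.prod_congr rfl fun i hi => neg_dk2_one_div_dk2_zero ?_
    linarith [hr_Icc i hi]
  refine ⟨hformula, hformula ▸ mul_pos ?_ (Finset.prod_pos fun i hi => ?_)⟩
  · exact one_div_pos.2 (dk2_zero_pos (hr j hj).le)
  · have := hr_Icc i hi
    positivity
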